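/- arXiv:gr-qc/0604029 — 12 statements merged into one kernel-verified Lean document; each statement's English description precedes it below -/
import Mathlib

section
/- (Theorem 2, sufficiency.) Let t₁ < t_s be reals, k ∈ ℝ, w < −1, and let a, μ : ℝ → ℝ be differentiable on (t₁, t_s) with a > 0, μ > 0, and H(t) := a'(t)/a(t) > 0 on (t₁, t_s). Assume the continuity equation μ' + 3H(1+w)μ = 0 and the Friedmann equation H² = μ/3 − k/a² hold on (t₁, t_s). If μ(t) → ∞ as t → t_s⁻ (equivalently, |p| = |w|μ → ∞), then as t → t_s⁻: a(t) → ∞, H(t) → ∞, |D(t)|² = μ(t)²/3 → ∞, and |E(t)|² = (1+3w)²·μ(t)²/12 → ∞. That is, the model has an (S₂, N₃, B₁) singularity (big rip) at t_s. -/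
open Filter Topology Set

/-!
The continuity equation says that `log μ + 3 (1 + w) log a` is a first integral of the motion
(equivalently, `μ a ^ (3 (1 + w))` is constant). Since `1 + w < 0`, `log a` is therefore an
increasing affine function of `log μ`, so `μ → ∞` forces `a → ∞`. The curvature term `k / a ^ 2`
then tends to `0`, and the Friedmann equation gives `H ^ 2 → ∞`, hence `H → ∞` as `H > 0`. The two
Bel–Robinson norms are positive multiples of `μ ^ 2`, because `1 + 3 w < -2` is nonzero.
-/

/-- Theorem 2, sufficiency: for a phantom fluid `p = w·μ`, `w < -1`,
satisfying the continuity and Friedmann equations on `(t₁, t_s)`, if `μ → ∞` as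
`t → t_s⁻` then `a → ∞`, `H → ∞`, `|D|² = μ²/3 → ∞` and `|E|² = (1+3w)²μ²/12 → ∞`,
i.e. an (S₂, N₃, B₁) big-rip singularity occurs at `t_s`. -/
theorem stmt_1 (t₁ ts : ℝ) (ht : t₁ < ts) (k w : ℝ) (hw : w < -1)
    (a μ : ℝ → ℝ)
    (ha : ∀ t ∈ Ioo t₁ ts, DifferentiableAt ℝ a t)
    (hμ : ∀ t ∈ Ioo t₁ ts, DifferentiableAt ℝ μ t)
    (hapos : ∀ t ∈ Ioo t₁ ts, 0 < a t)
    (hμpos : ∀ t ∈ Ioo t₁ ts, 0 < μ t)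
    (hHpos : ∀ t ∈ Ioo t₁ ts, 0 < deriv a t / a t)
    (hcont : ∀ t ∈ Ioo t₁ ts,
      deriv μ t + 3 * (deriv a t / a t) * (1 + w) * μ t = 0)
    (hfried : ∀ t ∈ Ioo t₁ ts,
      (deriv a t / a t) ^ 2 = μ t / 3 - k / a t ^ 2)
    (hμlim : Tendsto μ (𝓝[<] ts) atTop) :
    Tendsto a (𝓝[<] ts) atTop ∧
    Tendsto (fun t => deriv a t / a t) (𝓝[<] ts) atTop ∧
    Tendsto (fun t => μ t ^ 2 / 3) (𝓝[<] ts) atTop ∧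
    Tendsto (fun t => (1 + 3 * w) ^ 2 * μ t ^ 2 / 12) (𝓝[<] ts) atTop := by
  have hev : ∀ᶠ t in 𝓝[<] ts, t ∈ Ioo t₁ ts := Ioo_mem_nhdsLT ht
  have hw' : 3 * (1 + w) < 0 := by linarith
  have hderiv : ∀ t ∈ Ioo t₁ ts,
      HasDerivAt (fun t => Real.log (μ t) + 3 * (1 + w) * Real.log (a t)) 0 t := by
    intro t htt
    have h1 := (hμ t htt).hasDerivAt.log (hμpos t htt).ne'
    have h2 := ((ha t htt).hasDerivAt.log (hapos t htt).ne').const_mul (3 * (1 + w))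
    refine (h1.add h2).congr_deriv ?_
    have hne := (hμpos t htt).ne'
    have h3 : deriv μ t = -(3 * (1 + w) * (deriv a t / a t)) * μ t := by
      linarith [hcont t htt]
    rw [h3, mul_div_assoc, div_self hne]
    ring
  obtain ⟨C, hC⟩ : ∃ C, ∀ t ∈ Ioo t₁ ts,
      Real.log (μ t) + 3 * (1 + w) * Real.log (a t) = C := by
    apply isOpen_Ioo.exists_is_const_of_deriv_eq_zero isPreconnected_Ioo
    · exact fun t htt => (hderiv t htt).differentiableAt.differentiableWithinAt
    · exact fun t htt => (hderiv t htt).deriv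
  have hloga : Tendsto (fun t => Real.log (a t)) (𝓝[<] ts) atTop := by
    have h1 : Tendsto (fun t => (Real.log (μ t) - C) / (-(3 * (1 + w)))) (𝓝[<] ts) atTop :=
      (tendsto_atTop_add_const_right _ (-C)
        (Real.tendsto_log_atTop.comp hμlim)).atTop_div_const (by linarith)
    refine h1.congr' ?_
    filter_upwards [hev] with t htt
    rw [div_eq_iff (by linarith)]
    linarith [hC t htt]
  have hA : Tendsto a (𝓝[<] ts) atTop := by
    refine (Real.tendsto_exp_atTop.comp hloga).congr' ?_
    filter_upwards [hev] with t htt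
    exact Real.exp_log (hapos t htt)
  have hμsq : Tendsto (fun t => μ t ^ 2) (𝓝[<] ts) atTop :=
    (tendsto_pow_atTop two_ne_zero).comp hμlim
  refine ⟨hA, ?_, hμsq.atTop_div_const (by norm_num), ?_⟩
  · have hcurv : Tendsto (fun t => -(k / a t ^ 2)) (𝓝[<] ts) (𝓝 (-0)) :=
      (((tendsto_pow_atTop two_ne_zero).comp hA).const_div_atTop k).neg
    have hHsq : Tendsto (fun t => μ t / 3 + -(k / a t ^ 2)) (𝓝[<] ts) atTop :=
      (hμlim.atTop_div_const (by norm_num)).atTop_add hcurv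
    refine (Real.tendsto_sqrt_atTop.comp hHsq).congr' ?_
    filter_upwards [hev] with t htt
    rw [Function.comp_apply, ← sub_eq_add_neg, ← hfried t htt, Real.sqrt_sq (hHpos t htt).le]
  · have hE : 0 < (1 + 3 * w) ^ 2 := by nlinarith
    exact (hμsq.const_mul_atTop hE).atTop_div_const (by norm_num)
end

section
/- (Theorem 2, necessity.) Let t₁ < t_s be reals, k ∈ ℝ, w ∈ ℝ, and let a, μ : ℝ → ℝ be differentiable on (t₁, t_s) with a > 0, μ > 0, H := a'/a, satisfying the continuity equation μ' + 3H(1+w)μ = 0 on (t₁, t_s). If a(t) → ∞ and μ(t) → ∞ as t → t_s⁻, then necessarily w < −1 (and consequently |p| = |w|μ → ∞ as t → t_s⁻). -/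
/-!
The continuity equation says that `log μ + 3 (1 + w) log a` has zero derivative, so it is
constant on `(t₁, ts)` (`continuity_first_integral`); this is the integrated form
`μ ∝ a ^ (-3 (1 + w))`. If `w ≥ -1`, then near `ts`, where `a ≥ 1`, the second summand is
nonnegative, so `log μ` is bounded above by that constant, contradicting `μ → ∞`.
-/

open Filter Topology Set

/-- The integral `μ ∝ a ^ (-3 (1 + w))` of the continuity equation, in logarithmic form. -/
theorem continuity_first_integral (t₁ ts w : ℝ) (a μ : ℝ → ℝ)
    (ha : ∀ t ∈ Ioo t₁ ts, DifferentiableAt ℝ a t)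
    (hμ : ∀ t ∈ Ioo t₁ ts, DifferentiableAt ℝ μ t)
    (hapos : ∀ t ∈ Ioo t₁ ts, 0 < a t)
    (hμpos : ∀ t ∈ Ioo t₁ ts, 0 < μ t)
    (hcont : ∀ t ∈ Ioo t₁ ts,
      deriv μ t + 3 * (deriv a t / a t) * (1 + w) * μ t = 0) :
    ∃ c, ∀ t ∈ Ioo t₁ ts, Real.log (μ t) + 3 * (1 + w) * Real.log (a t) = c := by
  have hd : ∀ t ∈ Ioo t₁ ts,
      HasDerivAt (fun t => Real.log (μ t) + 3 * (1 + w) * Real.log (a t)) 0 t := by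
    intro t h
    have hm := (hμpos t h).ne'
    have hc := hcont t h
    have e : deriv μ t = -(3 * (deriv a t / a t) * (1 + w)) * μ t := by linarith
    have hz : deriv μ t / μ t + 3 * (1 + w) * (deriv a t / a t) = 0 := by
      rw [e, mul_div_cancel_right₀ _ hm]
      ring
    have hsum := ((hμ t h).hasDerivAt.log hm).add
      (((ha t h).hasDerivAt.log (hapos t h).ne').const_mul (3 * (1 + w)))
    rw [hz] at hsum
    exact hsum
  exact isOpen_Ioo.exists_is_const_of_deriv_eq_zero isPreconnected_Ioo
    (fun t h => (hd t h).differentiableAt.differentiableWithinAt) (fun t h => (hd t h).deriv)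

/-- Theorem 2, necessity: for a fluid with linear equation of state
`p = w·μ` satisfying the continuity equation on `(t₁, t_s)`, if both `a → ∞` and
`μ → ∞` as `t → t_s⁻` then necessarily `w < -1`, and consequently
`|p| = |w|·μ → ∞` as `t → t_s⁻`. -/
theorem stmt_2 (t₁ ts : ℝ) (ht : t₁ < ts) (k w : ℝ)
    (a μ : ℝ → ℝ)
    (ha : ∀ t ∈ Ioo t₁ ts, DifferentiableAt ℝ a t)
    (hμ : ∀ t ∈ Ioo t₁ ts, DifferentiableAt ℝ μ t)
    (hapos : ∀ t ∈ Ioo t₁ ts, 0 < a t)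
    (hμpos : ∀ t ∈ Ioo t₁ ts, 0 < μ t)
    (hcont : ∀ t ∈ Ioo t₁ ts,
      deriv μ t + 3 * (deriv a t / a t) * (1 + w) * μ t = 0)
    (halim : Tendsto a (𝓝[<] ts) atTop)
    (hμlim : Tendsto μ (𝓝[<] ts) atTop) :
    w < -1 ∧ Tendsto (fun t => |w * μ t|) (𝓝[<] ts) atTop := by
  have hw : w < -1 := by
    by_contra! hw
    obtain ⟨c, hc⟩ := continuity_first_integral t₁ ts w a μ ha hμ hapos hμpos hcont
    have hlog := Real.tendsto_log_atTop.comp hμlim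
    obtain ⟨t, ⟨h1, h2⟩, h3⟩ := ((halim.eventually_ge_atTop 1).and
      (hlog.eventually_gt_atTop c) |>.and (Ioo_mem_nhdsLT ht)).exists
    have hnonneg : 0 ≤ 3 * (1 + w) * Real.log (a t) :=
      mul_nonneg (by linarith) (Real.log_nonneg h1)
    have hct := hc t h3
    simp only [Function.comp_apply] at h2
    linarith
  refine ⟨hw, ?_⟩
  simp only [abs_mul]
  exact (tendsto_abs_atTop_atTop.comp hμlim).const_mul_atTop (abs_pos.mpr (by linarith))
end

section
/- Let I ⊆ ℝ be an open interval, B > 0, β > 1, and let a, μ : ℝ → ℝ be differentiable on I with a > 0 and μ > 0 on I. Suppose the continuity equation with equation of state p + μ = −Bμ^β holds on I, i.e. μ'(t) = 3·(a'(t)/a(t))·B·μ(t)^β for all t ∈ I. Then the function t ↦ a(t)·exp(−μ(t)^{1−β}/(3B(1−β))) is constant on I; equivalently a = a₀·exp(μ^{1−β}/(3B(1−β))) for some constant a₀ > 0. -/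
open Filter Topology Set

/-!
The function `F t = a t * exp (-(μ t ^ (1 - β)) / (3 * B * (1 - β)))` is an integrating factor
for the continuity equation. The exponent has derivative `-μ ^ (-β) * μ' / (3 * B)`, which the
equation turns into `-a' / a`; hence `F' = 0`, and `F` is constant on the interval `I`. Its
(positive) value is the constant `a₀`.
-/

/-- For a fluid with equation of state `p + μ = -B·μ^β` (`B > 0`, `β > 1`),
the continuity equation `μ' = 3(a'/a)Bμ^β` on an open interval `I` implies that
`t ↦ a(t)·exp(-μ(t)^(1-β)/(3B(1-β)))` is constant on `I`; equivalently
`a = a₀·exp(μ^(1-β)/(3B(1-β)))` for some constant `a₀ > 0`. -/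
theorem stmt_3 (I : Set ℝ) (hIopen : IsOpen I) (hIconn : I.OrdConnected)
    (B β : ℝ) (hB : 0 < B) (hβ : 1 < β)
    (a μ : ℝ → ℝ)
    (ha : ∀ t ∈ I, DifferentiableAt ℝ a t)
    (hμ : ∀ t ∈ I, DifferentiableAt ℝ μ t)
    (hapos : ∀ t ∈ I, 0 < a t)
    (hμpos : ∀ t ∈ I, 0 < μ t)
    (hcont : ∀ t ∈ I, deriv μ t = 3 * (deriv a t / a t) * B * μ t ^ β) :
    (∀ s ∈ I, ∀ t ∈ I,
      a s * Real.exp (-(μ s ^ (1 - β)) / (3 * B * (1 - β))) =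
        a t * Real.exp (-(μ t ^ (1 - β)) / (3 * B * (1 - β)))) ∧
    (∃ a₀ : ℝ, 0 < a₀ ∧ ∀ t ∈ I,
      a t = a₀ * Real.exp (μ t ^ (1 - β) / (3 * B * (1 - β)))) := by
  have hD : ∀ t ∈ I, HasDerivAt
      (fun t => a t * Real.exp (-(μ t ^ (1 - β)) / (3 * B * (1 - β)))) 0 t := by
    intro t ht
    have hm := hμpos t ht
    have hat := (hapos t ht).ne'
    have h1β : 1 - β ≠ 0 := by linarith
    have hpow := (hμ t ht).hasDerivAt.rpow_const (p := 1 - β) (Or.inl hm.ne')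
    have hF := (ha t ht).hasDerivAt.mul ((hpow.neg.div_const (3 * B * (1 - β))).exp)
    refine hF.congr_deriv ?_
    have hcancel : μ t ^ β * μ t ^ (1 - β - 1) = 1 := by
      rw [← Real.rpow_add hm]
      simp
    have hexponent : -(deriv μ t * (1 - β) * μ t ^ (1 - β - 1)) / (3 * B * (1 - β))
        = -(deriv a t / a t) := by
      rw [hcont t ht, div_eq_iff (by positivity)]
      linear_combination (-(3 * (deriv a t / a t) * B * (1 - β))) * hcancel
    simp only [Pi.neg_apply]
    rw [hexponent]
    field_simp
    ring
  have hconst : ∀ s ∈ I, ∀ t ∈ I,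
      a s * Real.exp (-(μ s ^ (1 - β)) / (3 * B * (1 - β))) =
        a t * Real.exp (-(μ t ^ (1 - β)) / (3 * B * (1 - β))) := fun s hs t ht =>
    hIopen.is_const_of_deriv_eq_zero hIconn.isPreconnected
      (fun x hx => (hD x hx).differentiableAt.differentiableWithinAt)
      (fun x hx => (hD x hx).deriv) hs ht
  refine ⟨hconst, ?_⟩
  -- On the empty interval any positive constant works.
  rcases I.eq_empty_or_nonempty with rfl | ⟨s, hs⟩
  · exact ⟨1, one_pos, by simp⟩
  · refine ⟨a s * Real.exp (-(μ s ^ (1 - β)) / (3 * B * (1 - β))),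
      mul_pos (hapos s hs) (Real.exp_pos _), fun t ht => ?_⟩
    rw [hconst s hs t ht, mul_assoc, ← Real.exp_add, neg_div, neg_add_cancel, Real.exp_zero,
      mul_one]
end

section
/- (Theorem 3.) Let t₁ < t_s be reals, k ∈ ℝ, B > 0, β > 1, and let a, μ : ℝ → ℝ be differentiable on (t₁, t_s) with a > 0, μ > 0, H := a'/a > 0 on (t₁, t_s). Assume the continuity equation μ' = 3HBμ^β and the Friedmann equation H² = μ/3 − k/a² hold on (t₁, t_s). If μ(t) → ∞ as t → t_s⁻, then as t → t_s⁻: a(t) converges to a finite positive limit a₀, H(t) → ∞, |D(t)|² = μ(t)²/3 → ∞, and |E(t)|² = (2μ(t) + 3Bμ(t)^β)²/12 → ∞. That is, the model has an (S₂, N₂, B₁) singularity at t_s. -/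
open Filter Topology Set

/-!
The quantity `log a + μ ^ (1 - β) / (3 * B * (β - 1))` is a first integral of the continuity
equation `μ' = 3 * H * B * μ ^ β` (lemma `exists_first_integral`). Since `β > 1`, its second summand
tends to `0` as `μ → ∞`, so `log a` converges and `a` has a finite positive limit. The curvature
term `k / a ^ 2` therefore stays bounded, and the Friedmann equation gives `H ^ 2 → ∞`, whence
`H → ∞` because `H > 0`. The two norms are explicit functions of `μ` that diverge with it.
-/

/-- Along a solution of the continuity equation, `log a + μ ^ (1 - β) / (3 * B * (β - 1))` is
constant: its derivative is `H - H`. -/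
lemma exists_first_integral (t₁ ts B β : ℝ) (hB : 0 < B) (hβ : 1 < β) (a μ : ℝ → ℝ)
    (ha : ∀ t ∈ Ioo t₁ ts, DifferentiableAt ℝ a t)
    (hμ : ∀ t ∈ Ioo t₁ ts, DifferentiableAt ℝ μ t)
    (hapos : ∀ t ∈ Ioo t₁ ts, 0 < a t)
    (hμpos : ∀ t ∈ Ioo t₁ ts, 0 < μ t)
    (hcont : ∀ t ∈ Ioo t₁ ts, deriv μ t = 3 * (deriv a t / a t) * B * μ t ^ β) :
    ∃ c : ℝ, ∀ t ∈ Ioo t₁ ts,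
      Real.log (a t) + μ t ^ (1 - β) / (3 * B * (β - 1)) = c := by
  have hderiv : ∀ t ∈ Ioo t₁ ts,
      HasDerivAt (fun t => Real.log (a t) + μ t ^ (1 - β) / (3 * B * (β - 1))) 0 t := by
    intro t ht
    have hμt := hμpos t ht
    have h := ((ha t ht).hasDerivAt.log (hapos t ht).ne').add
      (((hμ t ht).hasDerivAt.rpow_const (p := 1 - β) (Or.inl hμt.ne')).div_const
        (3 * B * (β - 1)))
    have hpow : μ t ^ β * μ t ^ (1 - β - 1) = 1 := by
      rw [← Real.rpow_add hμt, show β + (1 - β - 1) = 0 by ring, Real.rpow_zero]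
    have hβ' : β - 1 ≠ 0 := by linarith
    have hzero : deriv a t / a t
        + deriv μ t * (1 - β) * μ t ^ (1 - β - 1) / (3 * B * (β - 1)) = 0 := by
      rw [hcont t ht]
      calc _ = deriv a t / a t + (deriv a t / a t) * (1 - β) * (3 * B) / (3 * B * (β - 1))
            * (μ t ^ β * μ t ^ (1 - β - 1)) := by ring
        _ = 0 := by
          rw [hpow]
          generalize deriv a t / a t = H
          field_simp
          ring
    rw [hzero] at h
    exact h
  exact isOpen_Ioo.exists_is_const_of_deriv_eq_zero isPreconnected_Ioo
    (fun t ht => (hderiv t ht).differentiableAt.differentiableWithinAt)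
    (fun t ht => (hderiv t ht).deriv)

/-- Theorem 3: for a fluid with equation of state `p + μ = -B·μ^β`
(`B > 0`, `β > 1`) satisfying the continuity and Friedmann equations on `(t₁, t_s)`,
if `μ → ∞` as `t → t_s⁻` then `a` converges to a finite positive limit, `H → ∞`,
`|D|² = μ²/3 → ∞` and `|E|² = (2μ + 3Bμ^β)²/12 → ∞`, i.e. an (S₂, N₂, B₁)
singularity occurs at `t_s`. -/
theorem stmt_4 (t₁ ts : ℝ) (ht : t₁ < ts) (k B β : ℝ) (hB : 0 < B) (hβ : 1 < β)
    (a μ : ℝ → ℝ)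
    (ha : ∀ t ∈ Ioo t₁ ts, DifferentiableAt ℝ a t)
    (hμ : ∀ t ∈ Ioo t₁ ts, DifferentiableAt ℝ μ t)
    (hapos : ∀ t ∈ Ioo t₁ ts, 0 < a t)
    (hμpos : ∀ t ∈ Ioo t₁ ts, 0 < μ t)
    (hHpos : ∀ t ∈ Ioo t₁ ts, 0 < deriv a t / a t)
    (hcont : ∀ t ∈ Ioo t₁ ts, deriv μ t = 3 * (deriv a t / a t) * B * μ t ^ β)
    (hfried : ∀ t ∈ Ioo t₁ ts,
      (deriv a t / a t) ^ 2 = μ t / 3 - k / a t ^ 2)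
    (hμlim : Tendsto μ (𝓝[<] ts) atTop) :
    (∃ a₀ : ℝ, 0 < a₀ ∧ Tendsto a (𝓝[<] ts) (𝓝 a₀)) ∧
    Tendsto (fun t => deriv a t / a t) (𝓝[<] ts) atTop ∧
    Tendsto (fun t => μ t ^ 2 / 3) (𝓝[<] ts) atTop ∧
    Tendsto (fun t => (2 * μ t + 3 * B * μ t ^ β) ^ 2 / 12) (𝓝[<] ts) atTop := by
  have hev : ∀ᶠ t in 𝓝[<] ts, t ∈ Ioo t₁ ts := Ioo_mem_nhdsLT ht
  obtain ⟨c, hc⟩ := exists_first_integral t₁ ts B β hB hβ a μ ha hμ hapos hμpos hcont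
  have hpow : Tendsto (fun t => μ t ^ (1 - β)) (𝓝[<] ts) (𝓝 0) := by
    have h := (tendsto_rpow_neg_atTop (y := β - 1) (by linarith)).comp hμlim
    simpa only [Function.comp_def, neg_sub] using h
  have halim : Tendsto a (𝓝[<] ts) (𝓝 (Real.exp c)) := by
    have h : Tendsto (fun t => Real.exp (c - μ t ^ (1 - β) / (3 * B * (β - 1)))) (𝓝[<] ts)
        (𝓝 (Real.exp (c - 0 / (3 * B * (β - 1))))) :=
      (Real.continuous_exp.tendsto _).comp (tendsto_const_nhds.sub (hpow.div_const _))
    rw [zero_div, sub_zero] at h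
    refine h.congr' ?_
    filter_upwards [hev] with t htm
    rw [← hc t htm, add_sub_cancel_right, Real.exp_log (hapos t htm)]
  have hcurv : Tendsto (fun t => -(k / a t ^ 2)) (𝓝[<] ts) (𝓝 (-(k / Real.exp c ^ 2))) :=
    (tendsto_const_nhds.div (halim.pow 2) (by positivity)).neg
  have hHsq : Tendsto (fun t => μ t / 3 + -(k / a t ^ 2)) (𝓝[<] ts) atTop :=
    (hμlim.atTop_div_const (by norm_num)).atTop_add hcurv
  have hDlim : Tendsto (fun t => μ t ^ 2 / 3) (𝓝[<] ts) atTop :=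
    ((tendsto_pow_atTop two_ne_zero).comp hμlim).atTop_div_const (by norm_num)
  refine ⟨⟨Real.exp c, Real.exp_pos c, halim⟩, ?_, hDlim, ?_⟩
  · refine (Real.tendsto_sqrt_atTop.comp hHsq).congr' ?_
    filter_upwards [hev] with t htm
    rw [Function.comp_apply, ← sub_eq_add_neg, ← hfried t htm, Real.sqrt_sq (hHpos t htm).le]
  -- `|E| ^ 2 ≥ (2 * μ) ^ 2 / 12 = |D| ^ 2`, the `B` term being nonnegative.
  · refine tendsto_atTop_mono' _ ?_ hDlim
    filter_upwards [hev] with t htm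
    have hμt := hμpos t htm
    have hpos : 0 < 3 * B * μ t ^ β := by positivity
    nlinarith [mul_pos hμt hpos]
end

section
/- Let I ⊆ ℝ be an open interval, C > 0, γ > 0, μ₀ ∈ ℝ, and let a, μ : ℝ → ℝ be differentiable on I with a > 0 and μ(t) < μ₀ on I. Suppose the continuity equation with equation of state p + μ = −C(μ₀ − μ)^{−γ} holds on I, i.e. μ'(t) = 3·(a'(t)/a(t))·C·(μ₀ − μ(t))^{−γ} for all t ∈ I. Then the function t ↦ a(t)·exp((μ₀ − μ(t))^{γ+1}/(3C(γ+1))) is constant on I. -/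
/-! The logarithmic derivative of `a * exp E`, with `E = (μ₀ - μ)^(γ+1) / (3C(γ+1))`, is
`a'/a + E'`. Here `E' = -μ' (μ₀ - μ)^γ / (3C)`, which the continuity equation turns into `-a'/a`
since `(μ₀ - μ)^(-γ) (μ₀ - μ)^γ = 1` for `μ < μ₀`. So the function has zero derivative on a
connected open set and is constant there. -/

open Filter Topology Set

/-- For a fluid with equation of state `p + μ = -C(μ₀ - μ)^(-γ)`
(`C > 0`, `γ > 0`), the continuity equation `μ' = 3(a'/a)C(μ₀ - μ)^(-γ)` on an open
interval `I` (with `a > 0`, `μ < μ₀`) implies that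
`t ↦ a(t)·exp((μ₀ - μ(t))^(γ+1)/(3C(γ+1)))` is constant on `I`. -/
theorem stmt_5 (I : Set ℝ) (hIopen : IsOpen I) (hIconn : I.OrdConnected)
    (C γ μ₀ : ℝ) (hC : 0 < C) (hγ : 0 < γ)
    (a μ : ℝ → ℝ)
    (ha : ∀ t ∈ I, DifferentiableAt ℝ a t)
    (hμ : ∀ t ∈ I, DifferentiableAt ℝ μ t)
    (hapos : ∀ t ∈ I, 0 < a t)
    (hμlt : ∀ t ∈ I, μ t < μ₀)
    (hcont : ∀ t ∈ I, deriv μ t = 3 * (deriv a t / a t) * C * (μ₀ - μ t) ^ (-γ)) :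
    ∀ s ∈ I, ∀ t ∈ I,
      a s * Real.exp ((μ₀ - μ s) ^ (γ + 1) / (3 * C * (γ + 1))) =
        a t * Real.exp ((μ₀ - μ t) ^ (γ + 1) / (3 * C * (γ + 1))) := by
  have key : ∀ t ∈ I, HasDerivAt
      (fun t => a t * Real.exp ((μ₀ - μ t) ^ (γ + 1) / (3 * C * (γ + 1)))) 0 t := by
    intro t ht
    have hx : 0 < μ₀ - μ t := sub_pos.2 (hμlt t ht)
    have hane := (hapos t ht).ne'
    have hγ1 : γ + 1 ≠ 0 := by positivity
    have hpow := (((hμ t ht).hasDerivAt.const_sub μ₀).rpow_const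
      (p := γ + 1) (Or.inl hx.ne')).div_const (3 * C * (γ + 1))
    have hE : (-deriv μ t * (γ + 1) * (μ₀ - μ t) ^ (γ + 1 - 1)) / (3 * C * (γ + 1))
        = -(deriv a t / a t) := by
      have hxp : (μ₀ - μ t) ^ γ ≠ 0 := (Real.rpow_pos_of_pos hx γ).ne'
      rw [hcont t ht, add_sub_cancel_right, Real.rpow_neg hx.le]
      field_simp
    rw [hE] at hpow
    refine ((ha t ht).hasDerivAt.mul hpow.exp).congr_deriv ?_
    field_simp
    ring
  intro s hs t ht
  exact hIopen.is_const_of_deriv_eq_zero hIconn.isPreconnected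
    (fun x hx => (key x hx).differentiableAt.differentiableWithinAt)
    (fun x hx => (key x hx).deriv) hs ht
end

section
/- (Theorem 4.) Let t₁ < t_s be reals, k ∈ ℝ, C > 0, γ > 0, μ₀ > 0, and let a, μ : ℝ → ℝ be differentiable on (t₁, t_s) with a > 0, 0 < μ(t) < μ₀, and H := a'/a on (t₁, t_s). Assume the continuity equation μ' = 3HC(μ₀ − μ)^{−γ} and the Friedmann equation H² = μ/3 − k/a² hold on (t₁, t_s). If μ(t) → μ₀ as t → t_s⁻, then as t → t_s⁻: a(t) converges to a finite positive limit, H(t)² converges to a finite limit, |D(t)|² = μ(t)²/3 → μ₀²/3 (remains finite), and |E(t)|² = (2μ(t) + 3C(μ₀ − μ(t))^{−γ})²/12 → ∞. That is, the model has an (S₃, N₂, B₃) sudden singularity at t_s. -/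
/-!
Multiplying the continuity equation by `(μ₀ - μ) ^ γ` gives `3 C (log a)' = μ' (μ₀ - μ) ^ γ`, so
`3 C log a + (μ₀ - μ) ^ (γ + 1) / (γ + 1)` is a first integral on `(t₁, ts)`. As `μ → μ₀` the second
term vanishes, hence `log a` converges and `a` has a finite positive limit. The limit of `H ^ 2`
then follows from the Friedmann equation, and `|E|` blows up because `(μ₀ - μ) ^ (-γ) → ∞`.
-/

open Filter Topology Set

/-- The first integral of the continuity equation, which expresses `a` through `μ`. -/
lemma exists_scale_factor_eq {t₁ ts C γ μ₀ : ℝ} (hC : 0 < C) (hγ : 0 < γ) {a μ : ℝ → ℝ}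
    (ha : ∀ t ∈ Ioo t₁ ts, DifferentiableAt ℝ a t)
    (hμ : ∀ t ∈ Ioo t₁ ts, DifferentiableAt ℝ μ t)
    (hapos : ∀ t ∈ Ioo t₁ ts, 0 < a t)
    (hμlt : ∀ t ∈ Ioo t₁ ts, μ t < μ₀)
    (hcont : ∀ t ∈ Ioo t₁ ts,
      deriv μ t = 3 * (deriv a t / a t) * C * (μ₀ - μ t) ^ (-γ)) :
    ∃ c : ℝ, ∀ t ∈ Ioo t₁ ts,
      a t = Real.exp (c - (μ₀ - μ t) ^ (γ + 1) / (3 * C * (γ + 1))) := by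
  have hd : ∀ t ∈ Ioo t₁ ts, HasDerivAt
      (fun t => Real.log (a t) + (μ₀ - μ t) ^ (γ + 1) / (3 * C * (γ + 1))) 0 t := by
    intro t h
    have hp : 0 < μ₀ - μ t := sub_pos.2 (hμlt t h)
    have h1 := (ha t h).hasDerivAt.log (hapos t h).ne'
    have h2 := ((((hμ t h).hasDerivAt.const_sub μ₀).rpow_const (p := γ + 1)
      (Or.inl hp.ne')).div_const (3 * C * (γ + 1)))
    have hγ1 : γ + 1 ≠ 0 := by positivity
    have hpow : (μ₀ - μ t) ^ γ ≠ 0 := (Real.rpow_pos_of_pos hp γ).ne'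
    have ha0 := (hapos t h).ne'
    refine (h1.add h2).congr_deriv ?_
    rw [hcont t h, Real.rpow_neg hp.le, add_sub_cancel_right]
    field_simp
    ring
  obtain ⟨c, hc⟩ := isOpen_Ioo.exists_is_const_of_deriv_eq_zero isPreconnected_Ioo
    (fun t h => (hd t h).differentiableAt.differentiableWithinAt)
    (fun t h => (hd t h).deriv)
  refine ⟨c, fun t h => ?_⟩
  rw [← hc t h, add_sub_cancel_right, Real.exp_log (hapos t h)]

/-- Theorem 4: for a fluid with equation of state
`p + μ = -C(μ₀ - μ)^(-γ)` (`C > 0`, `γ > 0`, `μ₀ > 0`) satisfying the continuity and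
Friedmann equations on `(t₁, t_s)` with `0 < μ < μ₀`, if `μ → μ₀` as `t → t_s⁻` then
`a` converges to a finite positive limit, `H²` converges to a finite limit,
`|D|² = μ²/3 → μ₀²/3` stays finite, while `|E|² = (2μ + 3C(μ₀ - μ)^(-γ))²/12 → ∞`;
i.e. an (S₃, N₂, B₃) sudden singularity occurs at `t_s`. -/
theorem stmt_6 (t₁ ts : ℝ) (ht : t₁ < ts) (k C γ μ₀ : ℝ)
    (hC : 0 < C) (hγ : 0 < γ) (hμ₀ : 0 < μ₀)
    (a μ : ℝ → ℝ)
    (ha : ∀ t ∈ Ioo t₁ ts, DifferentiableAt ℝ a t)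
    (hμ : ∀ t ∈ Ioo t₁ ts, DifferentiableAt ℝ μ t)
    (hapos : ∀ t ∈ Ioo t₁ ts, 0 < a t)
    (hμpos : ∀ t ∈ Ioo t₁ ts, 0 < μ t)
    (hμlt : ∀ t ∈ Ioo t₁ ts, μ t < μ₀)
    (hcont : ∀ t ∈ Ioo t₁ ts,
      deriv μ t = 3 * (deriv a t / a t) * C * (μ₀ - μ t) ^ (-γ))
    (hfried : ∀ t ∈ Ioo t₁ ts,
      (deriv a t / a t) ^ 2 = μ t / 3 - k / a t ^ 2)
    (hμlim : Tendsto μ (𝓝[<] ts) (𝓝 μ₀)) :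
    (∃ as : ℝ, 0 < as ∧ Tendsto a (𝓝[<] ts) (𝓝 as)) ∧
    (∃ L : ℝ, Tendsto (fun t => (deriv a t / a t) ^ 2) (𝓝[<] ts) (𝓝 L)) ∧
    Tendsto (fun t => μ t ^ 2 / 3) (𝓝[<] ts) (𝓝 (μ₀ ^ 2 / 3)) ∧
    Tendsto (fun t => (2 * μ t + 3 * C * (μ₀ - μ t) ^ (-γ)) ^ 2 / 12)
      (𝓝[<] ts) atTop := by
  have hev : ∀ᶠ t in 𝓝[<] ts, t ∈ Ioo t₁ ts := Ioo_mem_nhdsLT ht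
  have hsub : Tendsto (fun t => μ₀ - μ t) (𝓝[<] ts) (𝓝 0) := by
    simpa using hμlim.const_sub μ₀
  have hsub' : Tendsto (fun t => μ₀ - μ t) (𝓝[<] ts) (𝓝[>] 0) :=
    tendsto_nhdsWithin_iff.2 ⟨hsub, hev.mono fun t h => sub_pos.2 (hμlt t h)⟩
  obtain ⟨c, hc⟩ := exists_scale_factor_eq hC hγ ha hμ hapos hμlt hcont
  have hpow : Tendsto (fun t => (μ₀ - μ t) ^ (γ + 1)) (𝓝[<] ts) (𝓝 0) := by
    have h := hsub.rpow_const (p := γ + 1) (Or.inr (by positivity))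
    rwa [Real.zero_rpow (by positivity)] at h
  have halim : Tendsto a (𝓝[<] ts) (𝓝 (Real.exp c)) := by
    have h := ((hpow.div_const (3 * C * (γ + 1))).const_sub c).rexp
    rw [zero_div, sub_zero] at h
    exact h.congr' (hev.mono fun t h => (hc t h).symm)
  refine ⟨⟨_, Real.exp_pos c, halim⟩, ⟨μ₀ / 3 - k / Real.exp c ^ 2, ?_⟩,
    (hμlim.pow 2).div_const 3, ?_⟩
  · refine Tendsto.congr' (hev.mono fun t h => (hfried t h).symm) ?_
    exact (hμlim.div_const 3).sub
      (tendsto_const_nhds.div (halim.pow 2) (pow_ne_zero 2 (Real.exp_pos c).ne'))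
  · have hblow : Tendsto (fun t => (μ₀ - μ t) ^ (-γ)) (𝓝[<] ts) atTop :=
      (tendsto_rpow_neg_nhdsGT_zero (neg_neg_iff_pos.2 hγ)).comp hsub'
    have hE := (hμlim.const_mul 2).add_atTop
      (hblow.const_mul_atTop (by positivity : 0 < 3 * C))
    exact ((tendsto_pow_atTop two_ne_zero).comp hE).atTop_div_const (by norm_num)
end

section
/- (Theorem 5.) Let t₁ < t₂ be reals, k ≤ 0 (open or flat universe), γ > 0, λ < 1, and let a, μ : ℝ → ℝ be differentiable on (t₁, t₂) with a > 0, μ > 0, and H := a'/a > 0 on (t₁, t₂). Assume the continuity equation μ' = −3Hγμ^λ and the Friedmann equation H² = μ/3 − k/a² hold on (t₁, t₂). If μ(t) → ∞ as t → t₁⁺, then as t → t₁⁺: a(t) → 0, H(t) → ∞, |D(t)|² = μ(t)²/3 → ∞, and |E(t)|² = (−2μ(t) + 3γμ(t)^λ)²/12 → ∞. That is, the model has an (S₁, N₁, B₁) big bang singularity at t₁. -/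
open Filter Topology Set

/-!
Dividing the continuity equation by `3γμ^λ` shows that
`log a + μ^(1-λ) / (3γ(1-λ))` has zero derivative, so it is constant on `(t₁, t₂)`
(`firstIntegral_const`). Since `1 - λ > 0`, `μ → ∞` forces `log a → -∞`, i.e. `a → 0`.
With `k ≤ 0` the Friedmann equation gives `H² ≥ μ/3`, hence `H → ∞`. Finally `μ^λ = o(μ)`,
so `-2μ` dominates `μ + 3p = -2μ + 3γμ^λ`, and `|E|²` diverges like `μ²`
(`tendsto_electric_atTop`).
-/

/-- First integral of the continuity equation, obtained by separating variables:
`d(log a) = H dt = -μ^(-λ) dμ / (3γ)`. -/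
lemma firstIntegral_const {t₁ t₂ γ lam : ℝ} (hγ : 0 < γ) (hlam : lam < 1) {a μ : ℝ → ℝ}
    (ha : ∀ t ∈ Ioo t₁ t₂, DifferentiableAt ℝ a t)
    (hμ : ∀ t ∈ Ioo t₁ t₂, DifferentiableAt ℝ μ t)
    (hapos : ∀ t ∈ Ioo t₁ t₂, 0 < a t)
    (hμpos : ∀ t ∈ Ioo t₁ t₂, 0 < μ t)
    (hcont : ∀ t ∈ Ioo t₁ t₂, deriv μ t = -(3 * (deriv a t / a t) * γ * μ t ^ lam)) :
    ∃ C : ℝ, ∀ t ∈ Ioo t₁ t₂,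
      Real.log (a t) + μ t ^ (1 - lam) / (3 * γ * (1 - lam)) = C := by
  have hderiv : ∀ t ∈ Ioo t₁ t₂,
      HasDerivAt (fun t => Real.log (a t) + μ t ^ (1 - lam) / (3 * γ * (1 - lam))) 0 t := by
    intro t htt
    have hlog := (ha t htt).hasDerivAt.log (hapos t htt).ne'
    have hpow := ((hμ t htt).hasDerivAt.rpow_const (p := 1 - lam)
      (Or.inl (hμpos t htt).ne')).div_const (3 * γ * (1 - lam))
    refine (hlog.add hpow).congr_deriv ?_
    have hcancel : μ t ^ lam * μ t ^ (1 - lam - 1) = 1 := by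
      rw [← Real.rpow_add (hμpos t htt)]
      simp
    have h1 : 1 - lam ≠ 0 := (sub_pos.2 hlam).ne'
    have hnum : deriv μ t * (1 - lam) * μ t ^ (1 - lam - 1)
        = -(deriv a t / a t) * (3 * γ * (1 - lam)) := by
      rw [hcont t htt]
      linear_combination (-(3 * (deriv a t / a t) * γ * (1 - lam))) * hcancel
    rw [hnum, mul_div_cancel_right₀ _ (by positivity)]
    ring
  exact isOpen_Ioo.exists_is_const_of_deriv_eq_zero isPreconnected_Ioo
    (fun t htt => (hderiv t htt).differentiableAt.differentiableWithinAt)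
    (fun t htt => (hderiv t htt).deriv)

/-- `|E|²` as a function of the density `x`: the exponent `λ < 1` makes `x^λ` negligible
against `x`, so `-2x + 3γx^λ ≤ -x` for large `x`. -/
lemma tendsto_electric_atTop (γ : ℝ) {lam : ℝ} (hlam : lam < 1) :
    Tendsto (fun x : ℝ => (-(2 * x) + 3 * γ * x ^ lam) ^ 2 / 12) atTop atTop := by
  have hsmall : Tendsto (fun x : ℝ => 3 * γ * x ^ (-(1 - lam))) atTop (𝓝 0) := by
    simpa using (tendsto_rpow_neg_atTop (sub_pos.2 hlam)).const_mul (3 * γ)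
  have hsq : Tendsto (fun x : ℝ => x ^ 2 / 12) atTop atTop :=
    (tendsto_pow_atTop two_ne_zero).atTop_div_const (by norm_num)
  refine tendsto_atTop_mono' _ ?_ hsq
  filter_upwards [hsmall.eventually_lt_const one_pos, eventually_gt_atTop 0] with x hx hx0
  have hsplit : x ^ lam = x ^ (-(1 - lam)) * x := by
    conv_rhs => rw [← Real.rpow_add_one hx0.ne']
    congr 1
    ring
  have hle : 3 * γ * x ^ lam ≤ x := by
    rw [hsplit]
    nlinarith
  nlinarith

/-- Theorem 5: in an open or flat (`k ≤ 0`) isotropic universe filled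
with a fluid with equation of state `p + μ = γ·μ^λ` (`γ > 0`, `λ < 1`), satisfying the
continuity and Friedmann equations on `(t₁, t₂)` with `H > 0`, if `μ → ∞` as `t → t₁⁺`
then `a → 0`, `H → ∞`, `|D|² = μ²/3 → ∞` and `|E|² = (-2μ + 3γμ^λ)²/12 → ∞`, i.e. an
(S₁, N₁, B₁) big bang singularity occurs at `t₁`. -/
theorem stmt_8 (t₁ t₂ : ℝ) (ht : t₁ < t₂) (k γ lam : ℝ)
    (hk : k ≤ 0) (hγ : 0 < γ) (hlam : lam < 1)
    (a μ : ℝ → ℝ)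
    (ha : ∀ t ∈ Ioo t₁ t₂, DifferentiableAt ℝ a t)
    (hμ : ∀ t ∈ Ioo t₁ t₂, DifferentiableAt ℝ μ t)
    (hapos : ∀ t ∈ Ioo t₁ t₂, 0 < a t)
    (hμpos : ∀ t ∈ Ioo t₁ t₂, 0 < μ t)
    (hHpos : ∀ t ∈ Ioo t₁ t₂, 0 < deriv a t / a t)
    (hcont : ∀ t ∈ Ioo t₁ t₂, deriv μ t = -(3 * (deriv a t / a t) * γ * μ t ^ lam))
    (hfried : ∀ t ∈ Ioo t₁ t₂,
      (deriv a t / a t) ^ 2 = μ t / 3 - k / a t ^ 2)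
    (hμlim : Tendsto μ (𝓝[>] t₁) atTop) :
    Tendsto a (𝓝[>] t₁) (𝓝 0) ∧
    Tendsto (fun t => deriv a t / a t) (𝓝[>] t₁) atTop ∧
    Tendsto (fun t => μ t ^ 2 / 3) (𝓝[>] t₁) atTop ∧
    Tendsto (fun t => (-(2 * μ t) + 3 * γ * μ t ^ lam) ^ 2 / 12) (𝓝[>] t₁) atTop := by
  have hmem : ∀ᶠ t in 𝓝[>] t₁, t ∈ Ioo t₁ t₂ := Ioo_mem_nhdsGT ht
  refine ⟨?_, ?_, ?_, ?_⟩
  · obtain ⟨C, hC⟩ := firstIntegral_const hγ hlam ha hμ hapos hμpos hcont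
    have hpos : 0 < 3 * γ * (1 - lam) := mul_pos (by positivity) (sub_pos.2 hlam)
    have hlog : Tendsto (fun t => C - μ t ^ (1 - lam) / (3 * γ * (1 - lam)))
        (𝓝[>] t₁) atBot := by
      simp only [sub_eq_add_neg C]
      exact tendsto_atBot_add_const_left _ C (tendsto_neg_atTop_atBot.comp
        (((tendsto_rpow_atTop (sub_pos.2 hlam)).comp hμlim).atTop_div_const hpos))
    refine (Real.tendsto_exp_atBot.comp hlog).congr' ?_
    filter_upwards [hmem] with t htt
    rw [Function.comp_apply, ← hC t htt, add_sub_cancel_right, Real.exp_log (hapos t htt)]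
  · have hsqrt : Tendsto (fun t => √(μ t / 3)) (𝓝[>] t₁) atTop :=
      Real.tendsto_sqrt_atTop.comp (hμlim.atTop_div_const (by norm_num))
    refine tendsto_atTop_mono' _ ?_ hsqrt
    filter_upwards [hmem] with t htt
    refine Real.sqrt_le_iff.2 ⟨(hHpos t htt).le, ?_⟩
    rw [hfried t htt]
    have hcurv : k / a t ^ 2 ≤ 0 := div_nonpos_of_nonpos_of_nonneg hk (sq_nonneg _)
    linarith
  · exact ((tendsto_pow_atTop two_ne_zero).comp hμlim).atTop_div_const (by norm_num)
  · exact (tendsto_electric_atTop γ hlam).comp hμlim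
end

section
/- (Theorem 6.) Let t₁ < t₂ be reals, k ∈ ℝ, and let a : ℝ → ℝ be differentiable and positive on (t₁, t₂), φ : ℝ → ℝ twice differentiable on (t₁, t₂) with φ'(t) ≠ 0, and H := a'/a > 0 on (t₁, t₂). Assume the massless scalar continuity equation φ'' + 3Hφ' = 0 and the Friedmann equation H² = φ'²/6 − k/a² hold on (t₁, t₂). Then φ'(t)² → ∞ as t → t₁⁺ if and only if, as t → t₁⁺: a(t) → 0, H(t) → ∞, |D(t)|² = φ'(t)⁴/12 → ∞, and |E(t)|² = φ'(t)⁴/3 → ∞. That is, φ'² → ∞ at t₁ is necessary and sufficient for an (S₁, N₁, B₁) singularity at t₁. -/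
open Filter Topology Set

/-!
The continuity equation says exactly that `φ' a³` is constant on `(t₁, t₂)`, so
`φ'² a⁶ = c` for some `c > 0`. If `φ'² → ∞`, then `a⁶ = c / φ'² → 0`, hence `a → 0`. Since
`1 / a² = a⁴ φ'² / c`, the Friedmann equation reads `H² = φ'² (1/6 - k a⁴ / c)`, where the bracket
tends to `1/6`; thus `H → ∞` whatever the sign of `k`. The statements about `φ'⁴` are elementary,
and `φ'⁴ / 12 → ∞` alone gives back `φ'² → ∞`.
-/

/-- A nonnegative function with divergent square diverges. -/
lemma tendsto_atTop_of_sq {α : Type*} {l : Filter α} {f : α → ℝ}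
    (h0 : ∀ᶠ t in l, 0 ≤ f t) (h : Tendsto (fun t => f t ^ 2) l atTop) :
    Tendsto f l atTop := by
  rw [tendsto_atTop]
  intro b
  filter_upwards [h0, tendsto_atTop.1 h (b ^ 2)] with t ht hb
  exact (abs_le_of_sq_le_sq' hb ht).2

/-- The first integral `φ' a³` of the continuity equation, in squared form. Here `p` plays the
role of `φ'`. -/
lemma exists_sq_mul_pow_six_eq {t₁ t₂ : ℝ} (ht : t₁ < t₂) {a p : ℝ → ℝ}
    (ha : ∀ t ∈ Ioo t₁ t₂, DifferentiableAt ℝ a t)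
    (hapos : ∀ t ∈ Ioo t₁ t₂, 0 < a t)
    (hp : ∀ t ∈ Ioo t₁ t₂, DifferentiableAt ℝ p t)
    (hpne : ∀ t ∈ Ioo t₁ t₂, p t ≠ 0)
    (hKG : ∀ t ∈ Ioo t₁ t₂, deriv p t + 3 * (deriv a t / a t) * p t = 0) :
    ∃ c : ℝ, 0 < c ∧ ∀ t ∈ Ioo t₁ t₂, p t ^ 2 * a t ^ 6 = c := by
  have hd : ∀ t ∈ Ioo t₁ t₂, HasDerivAt (fun s => p s * a s ^ 3) 0 t := by
    intro t hs
    have h := (hp t hs).hasDerivAt.mul ((ha t hs).hasDerivAt.pow 3)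
    refine h.congr_deriv ?_
    have hne := (hapos t hs).ne'
    have hk : deriv p t = -(3 * (deriv a t / a t) * p t) := by linarith [hKG t hs]
    simp only [Pi.pow_apply, hk]
    field_simp
    push_cast
    ring
  obtain ⟨m, hm⟩ := nonempty_Ioo.2 ht
  refine ⟨p m ^ 2 * a m ^ 6, ?_, fun t hs => ?_⟩
  · have := hpne m hm
    have := hapos m hm
    positivity
  · have h : p t * a t ^ 3 = p m * a m ^ 3 :=
      isOpen_Ioo.is_const_of_deriv_eq_zero isPreconnected_Ioo
        (fun s hs => (hd s hs).differentiableAt.differentiableWithinAt)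
        (fun s hs => (hd s hs).deriv) hs hm
    linear_combination (p t * a t ^ 3 + p m * a m ^ 3) * h

/-- Theorem 6: in an isotropic universe with a massless scalar field
(Klein–Gordon equation `φ'' + 3Hφ' = 0`, Friedmann equation `H² = φ'²/6 - k/a²`,
`φ' ≠ 0`, `H = a'/a > 0` on `(t₁, t₂)`), one has `φ'² → ∞` as `t → t₁⁺` if and only
if `a → 0`, `H → ∞`, `|D|² = φ'⁴/12 → ∞` and `|E|² = φ'⁴/3 → ∞` as `t → t₁⁺`;
i.e. `φ'² → ∞` at `t₁` is necessary and sufficient for an (S₁, N₁, B₁) singularity. -/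
theorem stmt_10 (t₁ t₂ k : ℝ) (ht : t₁ < t₂)
    (a φ : ℝ → ℝ)
    (ha : ∀ t ∈ Ioo t₁ t₂, DifferentiableAt ℝ a t)
    (hapos : ∀ t ∈ Ioo t₁ t₂, 0 < a t)
    (hφ : ∀ t ∈ Ioo t₁ t₂, DifferentiableAt ℝ φ t)
    (hφ' : ∀ t ∈ Ioo t₁ t₂, DifferentiableAt ℝ (deriv φ) t)
    (hφne : ∀ t ∈ Ioo t₁ t₂, deriv φ t ≠ 0)
    (hHpos : ∀ t ∈ Ioo t₁ t₂, 0 < deriv a t / a t)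
    (hKG : ∀ t ∈ Ioo t₁ t₂,
      deriv (deriv φ) t + 3 * (deriv a t / a t) * deriv φ t = 0)
    (hfried : ∀ t ∈ Ioo t₁ t₂,
      (deriv a t / a t) ^ 2 = (deriv φ t) ^ 2 / 6 - k / a t ^ 2) :
    Tendsto (fun t => (deriv φ t) ^ 2) (𝓝[>] t₁) atTop ↔
      (Tendsto a (𝓝[>] t₁) (𝓝 0) ∧
       Tendsto (fun t => deriv a t / a t) (𝓝[>] t₁) atTop ∧
       Tendsto (fun t => (deriv φ t) ^ 4 / 12) (𝓝[>] t₁) atTop ∧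
       Tendsto (fun t => (deriv φ t) ^ 4 / 3) (𝓝[>] t₁) atTop) := by
  have hI : ∀ᶠ t in 𝓝[>] t₁, t ∈ Ioo t₁ t₂ := Ioo_mem_nhdsGT ht
  constructor
  · intro hx
    obtain ⟨c, hc, hcons⟩ := exists_sq_mul_pow_six_eq ht ha hapos hφ' hφne hKG
    have ha0 : Tendsto a (𝓝[>] t₁) (𝓝 0) := by
      rw [Metric.tendsto_nhds]
      intro ε hε
      filter_upwards [hI, tendsto_atTop.1 hx (c / ε ^ 6 + 1)] with t hs hb
      have hap := hapos t hs
      rw [Real.dist_eq, sub_zero, abs_of_pos hap]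
      by_contra! hle
      have h6 : ε ^ 6 ≤ a t ^ 6 := by gcongr
      have h1 : (c / ε ^ 6 + 1) * ε ^ 6 ≤ deriv φ t ^ 2 * a t ^ 6 := by gcongr
      have h2 : (c / ε ^ 6 + 1) * ε ^ 6 = c + ε ^ 6 := by field_simp
      have h3 : 0 < ε ^ 6 := by positivity
      linarith [hcons t hs]
    have hx4 : Tendsto (fun t => deriv φ t ^ 4) (𝓝[>] t₁) atTop :=
      (hx.atTop_mul_atTop₀ hx).congr fun t => by ring
    refine ⟨ha0, ?_, hx4.atTop_div_const (by norm_num), hx4.atTop_div_const (by norm_num)⟩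
    have hlim : Tendsto (fun t => 1 / 6 - k / c * a t ^ 4) (𝓝[>] t₁) (𝓝 (1 / 6)) := by
      simpa [-one_div] using ((ha0.pow 4).const_mul (k / c)).const_sub (1 / 6 : ℝ)
    refine tendsto_atTop_of_sq (hI.mono fun t hs => (hHpos t hs).le) ?_
    refine (hx.atTop_mul_pos (by norm_num) hlim).congr' ?_
    filter_upwards [hI] with t hs
    have hne := (hapos t hs).ne'
    rw [hfried t hs]
    field_simp
    linear_combination -6 * k * hcons t hs
  · rintro ⟨-, -, hD, -⟩
    refine tendsto_atTop_of_sq (Eventually.of_forall fun t => sq_nonneg _) ?_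
    exact (hD.atTop_mul_const (by norm_num : (0 : ℝ) < 12)).congr fun t => by ring
end

section
/- (Trapped surface condition implies large Bel–Robinson density.) Let k ∈ ℝ, let a > 0 and ȧ ≥ 0 be reals, and let F > 0 and F' be reals satisfying F'² + k·F² = 1 (for example F = sin r, r, sinh r with respectively k = 1, 0, −1). If ȧ > |F'|/F, then ȧ² + k > 1/F² > 0, and consequently √3·(ȧ² + k)/a² > √3/(a²·F²). In particular, |D| = √3·|ȧ² + k|/a² = (√3/a²)·|(ȧ − F'/F)(ȧ + F'/F) + 1/F²| > √3/(a²F²). -/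
/-! The constraint gives `ȧ² + k = (ȧ - F'/F)(ȧ + F'/F) + 1/F²`, and the trapped-surface condition
`|F'/F| < ȧ` makes both factors positive; every bound follows by scaling with `√3/a² > 0`. -/

open Filter Topology Set

/-- Trapped surface condition implies large Bel–Robinson density:
if `F'² + k·F² = 1` with `F > 0`, `a > 0`, `ȧ ≥ 0` and `ȧ > |F'|/F`, then
`ȧ² + k > 1/F² > 0`, hence `√3(ȧ² + k)/a² > √3/(a²F²)`; in particular
`|D| = √3|ȧ² + k|/a² = (√3/a²)·|(ȧ - F'/F)(ȧ + F'/F) + 1/F²| > √3/(a²F²)`. -/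
theorem stmt_11 (k a adot F F' : ℝ) (ha : 0 < a) (hadot : 0 ≤ adot)
    (hF : 0 < F) (hFk : F' ^ 2 + k * F ^ 2 = 1)
    (htrap : adot > |F'| / F) :
    adot ^ 2 + k > 1 / F ^ 2 ∧
    0 < 1 / F ^ 2 ∧
    Real.sqrt 3 * (adot ^ 2 + k) / a ^ 2 > Real.sqrt 3 / (a ^ 2 * F ^ 2) ∧
    Real.sqrt 3 * |adot ^ 2 + k| / a ^ 2 =
      Real.sqrt 3 / a ^ 2 * |(adot - F' / F) * (adot + F' / F) + 1 / F ^ 2| ∧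
    Real.sqrt 3 * |adot ^ 2 + k| / a ^ 2 > Real.sqrt 3 / (a ^ 2 * F ^ 2) := by
  -- Dividing the constraint by `F²` turns `ȧ² + k` into `(ȧ² - (F'/F)²) + 1/F²`.
  have hid : adot ^ 2 + k = (adot - F' / F) * (adot + F' / F) + 1 / F ^ 2 := by
    have hk : k = (1 - F' ^ 2) / F ^ 2 := by
      rw [eq_div_iff (by positivity)]
      linarith
    rw [hk]
    field_simp
    ring
  have habs : |F' / F| < adot := by rwa [abs_div, abs_of_pos hF]
  obtain ⟨h₁, h₂⟩ := abs_lt.mp habs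
  have hprod : 0 < (adot - F' / F) * (adot + F' / F) :=
    mul_pos (by linarith) (by linarith)
  have hinv : 0 < 1 / F ^ 2 := by positivity
  have hgt : 1 / F ^ 2 < adot ^ 2 + k := by linarith
  have hbound : Real.sqrt 3 / (a ^ 2 * F ^ 2) < Real.sqrt 3 * (adot ^ 2 + k) / a ^ 2 := by
    have hsplit : Real.sqrt 3 / (a ^ 2 * F ^ 2) = Real.sqrt 3 * (1 / F ^ 2) / a ^ 2 := by
      field_simp
    rw [hsplit]
    gcongr
  refine ⟨hgt, hinv, hbound, ?_, ?_⟩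
  · rw [← hid]
    ring
  · rwa [abs_of_pos (hinv.trans hgt)]
end

section
/- (Graduated inflation exact solution.) Fix γ > 0 and for t > 0 define a(t) = exp(−16/(3^{3/2}·γ²·t)) and μ(t) = 256/(9·γ⁴·t⁴). Then for every t > 0: (i) the flat Friedmann equation holds, (a'(t)/a(t))² = μ(t)/3; (ii) the continuity equation with equation of state p + μ = γμ^{3/4} holds, μ'(t) + 3·(a'(t)/a(t))·γ·μ(t)^{3/4} = 0. Moreover, as t → 0⁺: a(t) → 0, H(t) = a'(t)/a(t) = 16/(3^{3/2}γ²t²) → ∞, and μ(t) → ∞ (so |E|² = (−2μ + 3γμ^{3/4})²/12 → ∞ and |D|² = μ²/3 → ∞), i.e. the solution has an (S₁, N₁, B₁) singularity at t = 0. -/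
/-!
With `c = 3 ^ (3/2)`, so that `c ^ 2 = 27`, everything is an explicit power of `t`: on `t > 0`
one has `a'/a = 16 / (c γ² t²)`, `μ' = -1024 / (9 γ⁴ t⁵)` and, since `μ = (16 / (3 γ² t²)) ^ 2`,
`μ ^ (3/4) = 64 / (c γ³ t³)`. The two equations are then rational identities modulo `c ^ 2 = 27`.
The limits follow from `t⁻¹ → ∞`; in `|E|²` the term `2 μ ~ t⁻⁴` dominates `μ ^ (3/4) ~ t⁻³`.
-/

open Filter Topology Set

theorem three_rpow_sq : ((3:ℝ) ^ ((3:ℝ)/2)) ^ 2 = 27 := by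
  rw [← Real.rpow_natCast, ← Real.rpow_mul (by norm_num)]
  norm_num

theorem density_rpow {γ t : ℝ} (hγ : 0 < γ) (ht : 0 < t) :
    (256 / (9 * γ ^ 4 * t ^ 4)) ^ ((3:ℝ)/4) = 64 / ((3:ℝ) ^ ((3:ℝ)/2) * γ ^ 3 * t ^ 3) := by
  have h1 : (256 / (9 * γ ^ 4 * t ^ 4)) = ((4 / (γ * t)) ^ 2 / 3) ^ (2:ℝ) := by
    rw [Real.rpow_two]
    field_simp
    norm_num
  rw [h1, ← Real.rpow_mul (by positivity), Real.div_rpow (by positivity) (by norm_num),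
    ← Real.rpow_two, ← Real.rpow_mul (by positivity)]
  have h2 : (2:ℝ) * (2 * (3/4)) = (3:ℕ) := by norm_num
  have h3 : (2:ℝ) * (3/4) = 3/2 := by norm_num
  rw [h2, h3, Real.rpow_natCast]
  field_simp
  norm_num

/-- Graduated inflation exact solution: for `γ > 0`,
`a(t) = exp(-16/(3^(3/2)γ²t))` and `μ(t) = 256/(9γ⁴t⁴)` satisfy, for all `t > 0`,
the flat Friedmann equation `(a'/a)² = μ/3` and the continuity equation
`μ' + 3(a'/a)γμ^(3/4) = 0`, with `H = a'/a = 16/(3^(3/2)γ²t²)`; and as `t → 0⁺`: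
`a → 0`, `H → ∞`, `μ → ∞`, `|E|² = (-2μ + 3γμ^(3/4))²/12 → ∞`, `|D|² = μ²/3 → ∞`,
i.e. an (S₁, N₁, B₁) singularity at `t = 0`. -/
theorem stmt_12 (γ : ℝ) (hγ : 0 < γ) (a μ : ℝ → ℝ)
    (ha : a = fun t => Real.exp (-16 / ((3:ℝ) ^ ((3:ℝ)/2) * γ ^ 2 * t)))
    (hμ : μ = fun t => 256 / (9 * γ ^ 4 * t ^ 4)) :
    (∀ t > (0:ℝ), (deriv a t / a t) ^ 2 = μ t / 3) ∧
    (∀ t > (0:ℝ), deriv μ t + 3 * (deriv a t / a t) * γ * μ t ^ ((3:ℝ)/4) = 0) ∧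
    (∀ t > (0:ℝ), deriv a t / a t = 16 / ((3:ℝ) ^ ((3:ℝ)/2) * γ ^ 2 * t ^ 2)) ∧
    Tendsto a (𝓝[>] 0) (𝓝 0) ∧
    Tendsto (fun t => deriv a t / a t) (𝓝[>] 0) atTop ∧
    Tendsto μ (𝓝[>] 0) atTop ∧
    Tendsto (fun t => (-(2 * μ t) + 3 * γ * μ t ^ ((3:ℝ)/4)) ^ 2 / 12) (𝓝[>] 0) atTop ∧
    Tendsto (fun t => μ t ^ 2 / 3) (𝓝[>] 0) atTop := by
  have hc2 := three_rpow_sq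
  have hc : 0 < (3:ℝ) ^ ((3:ℝ)/2) := by positivity
  have hm : ∀ t > (0:ℝ), μ t ^ ((3:ℝ)/4) = 64 / ((3:ℝ) ^ ((3:ℝ)/2) * γ ^ 3 * t ^ 3) := by
    intro t ht
    rw [hμ]
    exact density_rpow hγ ht
  generalize (3:ℝ) ^ ((3:ℝ)/2) = c at *
  have hH : ∀ t > (0:ℝ), deriv a t / a t = 16 / (c * γ ^ 2 * t ^ 2) := by
    intro t ht
    have h1 : HasDerivAt (fun t : ℝ => -16 / (c * γ ^ 2 * t)) (16 / (c * γ ^ 2 * t ^ 2)) t := by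
      have h := (hasDerivAt_inv ht.ne').const_mul (-16 / (c * γ ^ 2))
      refine (h.congr_deriv ?_).congr_of_eventuallyEq (Eventually.of_forall fun x => ?_)
      · field_simp
      · simp only [div_eq_mul_inv, mul_inv, mul_assoc]
    have h2 := h1.exp
    rw [ha, h2.deriv]
    exact mul_div_cancel_left₀ _ (Real.exp_ne_zero _)
  have hμ' : ∀ t > (0:ℝ), deriv μ t = -1024 / (9 * γ ^ 4 * t ^ 5) := by
    intro t ht
    have h := ((hasDerivAt_inv ht.ne').pow 4).const_mul (256 / (9 * γ ^ 4))
    have h1 : HasDerivAt μ (-1024 / (9 * γ ^ 4 * t ^ 5)) t := by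
      rw [hμ]
      refine (h.congr_deriv ?_).congr_of_eventuallyEq (Eventually.of_forall fun x => ?_)
      · simp only [inv_pow, Nat.cast_ofNat, Nat.reduceSub]
        field_simp
        norm_num
      · simp only [div_eq_mul_inv, mul_inv, mul_assoc, Pi.pow_apply, inv_pow]
    exact h1.deriv
  have hinv : Tendsto (fun t : ℝ => t⁻¹) (𝓝[>] 0) atTop := tendsto_inv_nhdsGT_zero
  have hpos : ∀ᶠ t : ℝ in 𝓝[>] 0, 0 < t := self_mem_nhdsWithin
  have tμ : Tendsto μ (𝓝[>] 0) atTop := by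
    have h := ((tendsto_pow_atTop (α := ℝ) (n := 4) (by norm_num)).comp hinv).const_mul_atTop
      (show 0 < 256 / (9 * γ ^ 4) by positivity)
    refine h.congr fun t => ?_
    simp only [hμ, Function.comp, div_eq_mul_inv, mul_inv, mul_assoc, inv_pow]
  refine ⟨?_, ?_, hH, ?_, ?_, tμ, ?_, ?_⟩
  · intro t ht
    rw [hH t ht, hμ, div_pow, mul_pow, mul_pow, hc2]
    field_simp
    norm_num
  · intro t ht
    rw [hH t ht, hm t ht, hμ' t ht]
    have : 3 * (16 / (c * γ ^ 2 * t ^ 2)) * γ * (64 / (c * γ ^ 3 * t ^ 3))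
        = 3072 / (c ^ 2 * γ ^ 4 * t ^ 5) := by
      field_simp
      norm_num
    rw [this, hc2]
    field_simp
    norm_num
  · have h := hinv.const_mul_atTop_of_neg (show -16 / (c * γ ^ 2) < 0 from
      div_neg_of_neg_of_pos (by norm_num) (by positivity))
    refine (Real.tendsto_exp_atBot.comp h).congr fun t => ?_
    simp only [ha, Function.comp, div_eq_mul_inv, mul_inv, mul_assoc]
  · have h := ((tendsto_pow_atTop (α := ℝ) (n := 2) (by norm_num)).comp hinv).const_mul_atTop
      (show 0 < 16 / (c * γ ^ 2) by positivity)
    refine h.congr' ?_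
    filter_upwards [hpos] with t ht
    rw [hH t ht]
    simp only [Function.comp, div_eq_mul_inv, mul_inv, mul_assoc, inv_pow]
  -- `2 μ - 3 γ μ ^ (3/4) = μ * (2 - 27 γ² t / (4 c))`, whose second factor tends to `2`.
  · have h1 : Tendsto (fun t : ℝ => 2 - 27 * γ ^ 2 * t / (4 * c)) (𝓝[>] 0) (𝓝 2) := by
      have : Continuous (fun t : ℝ => 2 - 27 * γ ^ 2 * t / (4 * c)) := by fun_prop
      have h := (this.tendsto 0).mono_left (nhdsWithin_le_nhds (s := Ioi 0))
      simpa using h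
    have h2 := tμ.atTop_mul_pos (by norm_num : (0:ℝ) < 2) h1
    have h3 := ((tendsto_pow_atTop (α := ℝ) (n := 2) (by norm_num)).comp h2).atTop_div_const
      (show (0:ℝ) < 12 by norm_num)
    refine h3.congr' ?_
    filter_upwards [hpos] with t ht
    have h4 : -(2 * μ t) + 3 * γ * μ t ^ ((3:ℝ)/4)
        = -(μ t * (2 - 27 * γ ^ 2 * t / (4 * c))) := by
      rw [hm t ht, hμ]
      field_simp
      ring
    rw [h4, neg_sq]
    rfl
  · exact ((tendsto_pow_atTop (α := ℝ) (n := 2) (by norm_num)).comp tμ).atTop_div_const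
      (show (0:ℝ) < 3 by norm_num)
end

section
/- (Mildest singularity: divergence only in the second derivative of H.) Fix a₀ > 0 and for τ > 0 define a(τ) = a₀·exp(τ^{8/3}) and H(τ) = a'(τ)/a(τ). Then H(τ) = (8/3)·τ^{5/3} for all τ > 0, and as τ → 0⁺: a(τ) → a₀, H(τ) → 0, H'(τ) = (40/9)·τ^{2/3} → 0, while H''(τ) = (80/27)·τ^{−1/3} → ∞. Thus a, a', a'', H and H' all remain finite at τ = 0 while the second derivative of the Hubble rate diverges. -/
/-!
On the open half-line `τ > 0` every power `τ ^ r` is differentiable, so `H = (log a)' = (τ ^ (8/3))'`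
and the closed forms of `H`, `H'`, `H''` follow by repeatedly applying the power rule; each
differentiation only uses the previous closed form on a neighbourhood of the point, supplied by
openness of `(0, ∞)`. The limits at `0⁺` are then decided by the sign of the exponent:
`5/3, 2/3 > 0` give `0`, while `-1/3 < 0` gives `+∞`.
-/

open Filter Topology Set

/-- The power rule for a function known only on `(0, ∞)`; its values at `τ ≤ 0` are irrelevant. -/
theorem deriv_eq_of_eq_rpow_on_pos {f : ℝ → ℝ} {c r : ℝ}
    (hf : ∀ τ > (0:ℝ), f τ = c * τ ^ r) {τ : ℝ} (hτ : 0 < τ) :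
    deriv f τ = c * (r * τ ^ (r - 1)) := by
  have he : f =ᶠ[𝓝 τ] fun x => c * x ^ r := by
    filter_upwards [Ioi_mem_nhds hτ] with x hx using hf x hx
  rw [he.deriv_eq]
  exact ((Real.hasDerivAt_rpow_const (Or.inl hτ.ne')).const_mul c).deriv

theorem tendsto_rpow_nhdsGT_zero {r : ℝ} (hr : 0 < r) :
    Tendsto (fun τ : ℝ => τ ^ r) (𝓝[>] 0) (𝓝 0) := by
  have h := (Real.continuousAt_rpow_const 0 r (Or.inr hr.le)).tendsto
  rw [Real.zero_rpow hr.ne'] at h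
  exact h.mono_left nhdsWithin_le_nhds

theorem tendsto_zero_of_eq_rpow_on_pos {f : ℝ → ℝ} {c r : ℝ} (hr : 0 < r)
    (hf : ∀ τ > (0:ℝ), f τ = c * τ ^ r) : Tendsto f (𝓝[>] 0) (𝓝 0) := by
  have h := (tendsto_rpow_nhdsGT_zero hr).const_mul c
  rw [mul_zero] at h
  refine h.congr' ?_
  filter_upwards [self_mem_nhdsWithin] with x hx using (hf x hx).symm

/-- Mildest singularity: divergence only in `H''`: for
`a(τ) = a₀·exp(τ^(8/3))` and `H = a'/a`, one has `H(τ) = (8/3)τ^(5/3)` for `τ > 0`,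
and as `τ → 0⁺`: `a → a₀`, `H → 0`, `H'(τ) = (40/9)τ^(2/3) → 0`, while
`H''(τ) = (80/27)τ^(-1/3) → ∞`. -/
theorem stmt_14 (a₀ : ℝ) (ha₀ : 0 < a₀) (a H : ℝ → ℝ)
    (ha : a = fun τ => a₀ * Real.exp (τ ^ ((8:ℝ)/3)))
    (hH : H = fun τ => deriv a τ / a τ) :
    (∀ τ > (0:ℝ), H τ = 8/3 * τ ^ ((5:ℝ)/3)) ∧
    Tendsto a (𝓝[>] 0) (𝓝 a₀) ∧
    Tendsto H (𝓝[>] 0) (𝓝 0) ∧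
    (∀ τ > (0:ℝ), deriv H τ = 40/9 * τ ^ ((2:ℝ)/3)) ∧
    Tendsto (deriv H) (𝓝[>] 0) (𝓝 0) ∧
    (∀ τ > (0:ℝ), deriv (deriv H) τ = 80/27 * τ ^ (-(1:ℝ)/3)) ∧
    Tendsto (deriv (deriv H)) (𝓝[>] 0) atTop := by
  have h1 : ∀ τ > (0:ℝ), H τ = 8/3 * τ ^ ((5:ℝ)/3) := by
    intro τ hτ
    have hd : HasDerivAt a
        (a₀ * (Real.exp (τ ^ ((8:ℝ)/3)) * ((8:ℝ)/3 * τ ^ ((8:ℝ)/3 - 1)))) τ := by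
      rw [ha]
      exact ((Real.hasDerivAt_rpow_const (Or.inl hτ.ne')).exp).const_mul a₀
    have hexp : Real.exp (τ ^ ((8:ℝ)/3)) ≠ 0 := Real.exp_ne_zero _
    have hH' : H τ = deriv a τ / a τ := by rw [hH]
    have haτ : a τ = a₀ * Real.exp (τ ^ ((8:ℝ)/3)) := by rw [ha]
    rw [hH', hd.deriv, haτ, show (8:ℝ)/3 - 1 = 5/3 by norm_num]
    field_simp
  have h2 : ∀ τ > (0:ℝ), deriv H τ = 40/9 * τ ^ ((2:ℝ)/3) := by
    intro τ hτ
    rw [deriv_eq_of_eq_rpow_on_pos h1 hτ, show (5:ℝ)/3 - 1 = 2/3 by norm_num]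
    ring
  have h3 : ∀ τ > (0:ℝ), deriv (deriv H) τ = 80/27 * τ ^ (-(1:ℝ)/3) := by
    intro τ hτ
    rw [deriv_eq_of_eq_rpow_on_pos h2 hτ, show (2:ℝ)/3 - 1 = -(1:ℝ)/3 by norm_num]
    ring
  refine ⟨h1, ?_, tendsto_zero_of_eq_rpow_on_pos (by norm_num) h1, h2,
    tendsto_zero_of_eq_rpow_on_pos (by norm_num) h2, h3, ?_⟩
  · have h := ((Real.continuous_exp.tendsto 0).comp
      (tendsto_rpow_nhdsGT_zero (r := 8/3) (by norm_num))).const_mul a₀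
    rw [Real.exp_zero, mul_one] at h
    rw [ha]
    exact h
  · have h : Tendsto (fun τ : ℝ => 80/27 * τ ^ (-(1:ℝ)/3)) (𝓝[>] 0) atTop :=
      (tendsto_rpow_neg_nhdsGT_zero (by norm_num)).const_mul_atTop (by norm_num)
    refine h.congr' ?_
    filter_upwards [self_mem_nhdsWithin] with x hx using (h3 x hx).symm
end

section
/- (Asymptotic strength a ≪ H ≪ μ for strongly phantom big rips.) Let w < −5/3, A > 0, a₀ > 0, t₀ ∈ ℝ, set t_s = t₀ + 2·a₀^{3(1+w)/2}/(3·√A·|1+w|), and for t ∈ (t₀, t_s) define b(t) = a₀^{3(1+w)/2} + (3(1+w)√A/2)·(t − t₀), a(t) = b(t)^{2/(3(1+w))}, H(t) = √A·b(t)^{−1}, μ(t) = 3A·a(t)^{−3(1+w)} = 3·b(t)^{−2}. Then as t → t_s⁻: a(t)/H(t) → 0 and H(t)/μ(t) → 0. That is, for the exact phantom solution with w < −5/3 the scale factor diverges strictly more slowly than the Hubble rate, which in turn diverges strictly more slowly than the density (hence than |D| = μ/√3 and |E| = |1+3w|μ/(2√3)). -/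
/-!
The affine function `b` is decreasing (as `1 + w < 0`) and vanishes exactly at `ts`, so it tends to
`0` through positive values as `t → ts⁻`. Where `b > 0`, the two ratios are
`a / H = b ^ (2 / (3 * (1 + w)) + 1) / √A` and `H / μ = (√A / (3 * A)) * b`. Both powers of `b` are
positive: for the first one, `w < -5/3` says precisely that `3 * (1 + w) < -2`, that is,
`2 / (3 * (1 + w)) > -1`.
-/

open Filter Topology Set

/-- Asymptotic strength `a ≪ H ≪ μ` for strongly phantom big rips:
for the exact phantom solution with `w < -5/3`, `A > 0`, `a₀ > 0`, where
`t_s = t₀ + 2a₀^(3(1+w)/2)/(3√A|1+w|)`,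
`b(t) = a₀^(3(1+w)/2) + (3(1+w)√A/2)(t - t₀)`, `a(t) = b(t)^(2/(3(1+w)))`,
`H(t) = √A·b(t)⁻¹` and `μ(t) = 3A·a(t)^(-3(1+w))`, one has `a/H → 0` and
`H/μ → 0` as `t → t_s⁻`: the scale factor diverges strictly more slowly than the
Hubble rate, which diverges strictly more slowly than the density (hence than
`|D| = μ/√3` and `|E| = |1+3w|μ/(2√3)`). -/
theorem stmt_19 (w A a₀ t₀ : ℝ) (hw : w < -5/3) (hA : 0 < A) (ha₀ : 0 < a₀)
    (ts : ℝ) (b a H μ : ℝ → ℝ)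
    (hts : ts = t₀ + 2 * a₀ ^ (3 * (1 + w) / 2) / (3 * Real.sqrt A * |1 + w|))
    (hb : b = fun t =>
      a₀ ^ (3 * (1 + w) / 2) + 3 * (1 + w) * Real.sqrt A / 2 * (t - t₀))
    (ha : a = fun t => b t ^ (2 / (3 * (1 + w))))
    (hH : H = fun t => Real.sqrt A * (b t)⁻¹)
    (hμ : μ = fun t => 3 * A * a t ^ (-(3 * (1 + w)))) :
    Tendsto (fun t => a t / H t) (𝓝[<] ts) (𝓝 0) ∧
    Tendsto (fun t => H t / μ t) (𝓝[<] ts) (𝓝 0) := by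
  have hs : 0 < √A := Real.sqrt_pos.2 hA
  have hw1 : 1 + w < 0 := by linarith
  have hk : 3 * (1 + w) < 0 := by linarith
  have hp : 0 < 2 / (3 * (1 + w)) + 1 := by
    have : -1 < 2 / (3 * (1 + w)) := by
      rw [lt_div_iff_of_neg hk]; linarith
    linarith
  have hbt : ∀ t, b t = 3 * (1 + w) * √A / 2 * (t - ts) := by
    intro t
    have hne : 1 + w ≠ 0 := hw1.ne
    rw [hb, hts, abs_of_neg hw1]
    field_simp
    ring
  have hpos : ∀ᶠ t in 𝓝[<] ts, 0 < b t := by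
    filter_upwards [self_mem_nhdsWithin] with t ht
    rw [hbt]
    have hc : 3 * (1 + w) * √A / 2 < 0 := by
      have := mul_neg_of_neg_of_pos hk hs
      linarith
    exact mul_pos_of_neg_of_neg hc (sub_neg.2 ht)
  have hb0 : Tendsto b (𝓝[<] ts) (𝓝 0) := by
    have hcont : Continuous b := by rw [hb]; fun_prop
    have h := (hcont.tendsto ts).mono_left (nhdsWithin_le_nhds (s := Iio ts))
    rwa [hbt ts, sub_self, mul_zero] at h
  constructor
  · have h := (hb0.rpow_const (Or.inr hp.le)).div_const √A
    rw [Real.zero_rpow hp.ne', zero_div] at h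
    refine h.congr' ?_
    filter_upwards [hpos] with t ht
    simp only [ha, hH]
    rw [Real.rpow_add ht, Real.rpow_one]
    field_simp
  · have h := hb0.const_mul (√A / (3 * A))
    rw [mul_zero] at h
    refine h.congr' ?_
    filter_upwards [hpos] with t ht
    have hexp : 2 / (3 * (1 + w)) * -(3 * (1 + w)) = -2 := by
      rw [mul_neg, div_mul_cancel₀ _ hk.ne]
    simp only [hH, hμ, ha]
    rw [← Real.rpow_mul ht.le, hexp, Real.rpow_neg ht.le, Real.rpow_two]
    field_simp
end
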